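/- arXiv:2011.12223 — 6 statements merged into one kernel-verified Lean document; each statement's English description precedes it below -/
import Mathlib

section
/- For every nonzero v ∈ V₅: (i) F_v ∩ ⋀³V₅ = v∧⋀²V₅ := {v∧α : α ∈ ⋀²V₅}, which is 6-dimensional; (ii) v∧⋀²V₅ = {β ∈ ⋀³V₅ : vol(x∧γ∧β) = 0 for all γ ∈ v∧V₅}, i.e. it is the annihilator of v∧V₅ under the pairing (γ,β) ↦ vol(x∧γ∧β); (iii) writing each element of F_v uniquely as η + x∧w with η ∈ ⋀³V₅ and w ∈ ⋀²V₅ (using the direct sum decomposition ⋀³V₆ = ⋀³V₅ ⊕ (x∧⋀²V₅)), the set of components w arising from elements of F_v is exactly v∧V₅. -/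
open ExteriorAlgebra Module

noncomputable section

namespace EPW

variable (V : Type) [AddCommGroup V] [Module ℂ V]

/-- A volume form `vol : ⋀ᵏV → ℂ` extended to the whole exterior algebra by composing with
the projection onto the degree-`k` graded component; on `⋀ᵏV` it agrees with `vol`. -/
def volC (k : ℕ) (vol : ⋀[ℂ]^k V →ₗ[ℂ] ℂ) : ExteriorAlgebra ℂ V →ₗ[ℂ] ℂ :=
  vol ∘ₗ (DirectSum.component ℂ ℕ (fun i => ↥(⋀[ℂ]^i V)) k) ∘ₗ
    (DirectSum.decomposeLinearEquiv (fun i : ℕ => ⋀[ℂ]^i V)).toLinearMap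

/-- `F_v = v ∧ ⋀²V₆ = {v ∧ η : η ∈ ⋀²V₆}`. -/
def Fv (v : V) : Submodule ℂ (ExteriorAlgebra ℂ V) :=
  Submodule.map (LinearMap.mulLeft ℂ (ExteriorAlgebra.ι ℂ v)) (⋀[ℂ]^2 V)

/-- The image of `⋀ᵏW` inside the exterior algebra of `V`, for a subspace `W ⊆ V`. -/
def extPow (W : Submodule ℂ V) (k : ℕ) : Submodule ℂ (ExteriorAlgebra ℂ V) :=
  (Submodule.map (ExteriorAlgebra.ι ℂ) W) ^ k

/-- `v ∧ W = {v ∧ u : u ∈ W}` for a subspace `W ⊆ V`. -/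
def vWedge (v : V) (W : Submodule ℂ V) : Submodule ℂ (ExteriorAlgebra ℂ V) :=
  Submodule.map (LinearMap.mulLeft ℂ (ExteriorAlgebra.ι ℂ v))
    (Submodule.map (ExteriorAlgebra.ι ℂ) W)

end EPW


namespace EPW

variable {V : Type} [AddCommGroup V] [Module ℂ V]

/-- Contraction of the exterior algebra by a functional. -/
def con (d : Module.Dual ℂ V) : ExteriorAlgebra ℂ V →ₗ[ℂ] ExteriorAlgebra ℂ V :=
  CliffordAlgebra.contractLeft (Q := (0 : QuadraticForm ℂ V)) d

lemma con_mul (d : Module.Dual ℂ V) (a : V) (b : ExteriorAlgebra ℂ V) :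
    con d (ι ℂ a * b) = d a • b - ι ℂ a * con d b :=
  CliffordAlgebra.contractLeft_ι_mul (Q := (0 : QuadraticForm ℂ V)) (d := d) a b

lemma con_ι (d : Module.Dual ℂ V) (a : V) :
    con d (ι ℂ a) = algebraMap ℂ _ (d a) :=
  CliffordAlgebra.contractLeft_ι (Q := (0 : QuadraticForm ℂ V)) d a

lemma con_algebraMap (d : Module.Dual ℂ V) (r : ℂ) :
    con d (algebraMap ℂ _ r) = 0 :=
  CliffordAlgebra.contractLeft_algebraMap (Q := (0 : QuadraticForm ℂ V)) d r

lemma ext_induct (W : Submodule ℂ V) (k : ℕ) (P : ExteriorAlgebra ℂ V → Prop)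
    (h0 : ∀ a ∈ W, ∀ φ ∈ extPow V W k, P (ι ℂ a * φ))
    (hadd : ∀ y z, P y → P z → P (y + z)) :
    ∀ θ ∈ extPow V W (k + 1), P θ := by
  intro θ hθ
  unfold extPow at hθ
  rw [pow_succ'] at hθ
  refine Submodule.mul_induction_on hθ ?_ hadd
  rintro _ ⟨a, ha, rfl⟩ φ hφ
  exact h0 a ha φ hφ

lemma mul_mem_ext {W : Submodule ℂ V} {k : ℕ} {a : V} (ha : a ∈ W) {φ : ExteriorAlgebra ℂ V}
    (hφ : φ ∈ extPow V W k) : ι ℂ a * φ ∈ extPow V W (k + 1) := by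
  unfold extPow at *
  rw [pow_succ']
  exact Submodule.mul_mem_mul ⟨a, ha, rfl⟩ hφ

lemma ι_mem_ext {W : Submodule ℂ V} {a : V} (ha : a ∈ W) : ι ℂ a ∈ extPow V W 1 := by
  unfold extPow
  rw [pow_one]
  exact ⟨a, ha, rfl⟩

lemma mem_ext_one {W : Submodule ℂ V} {y : ExteriorAlgebra ℂ V} (hy : y ∈ extPow V W 1) :
    ∃ a ∈ W, ι ℂ a = y := by
  unfold extPow at hy
  rw [pow_one] at hy
  exact hy

lemma con_ext_zero (d : Module.Dual ℂ V) {W : Submodule ℂ V} {φ : ExteriorAlgebra ℂ V}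
    (hφ : φ ∈ extPow V W 0) : con d φ = 0 := by
  unfold extPow at hφ
  rw [pow_zero, Submodule.mem_one] at hφ
  obtain ⟨r, rfl⟩ := hφ
  exact con_algebraMap d r

lemma con_kill (d : Module.Dual ℂ V) {W : Submodule ℂ V} (hd : ∀ w ∈ W, d w = 0) (k : ℕ) :
    ∀ φ ∈ extPow V W k, con d φ = 0 := by
  induction k with
  | zero => intro φ hφ; exact con_ext_zero d hφ
  | succ k ih =>
    apply ext_induct
    · intro a ha φ hφ
      rw [con_mul, hd a ha, ih φ hφ]; simp
    · intro y z hy hz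
      rw [map_add, hy, hz, add_zero]

lemma con_mem (d : Module.Dual ℂ V) {W : Submodule ℂ V} (k : ℕ) :
    ∀ φ ∈ extPow V W (k + 1), con d φ ∈ extPow V W k := by
  induction k with
  | zero =>
    apply ext_induct
    · intro a ha φ hφ
      rw [con_mul, con_ext_zero d hφ, mul_zero, sub_zero]
      exact Submodule.smul_mem _ _ hφ
    · intro y z hy hz
      rw [map_add]; exact add_mem hy hz
  | succ k ih =>
    apply ext_induct
    · intro a ha φ hφ
      rw [con_mul]
      exact sub_mem (Submodule.smul_mem _ _ hφ) (mul_mem_ext ha (ih φ hφ))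
    · intro y z hy hz
      rw [map_add]; exact add_mem hy hz

lemma ι_anti (a b : V) : ι ℂ a * ι ℂ b = - (ι ℂ b * ι ℂ a) :=
  eq_neg_of_add_eq_zero_left (ExteriorAlgebra.ι_add_mul_swap a b)

lemma ι_anti' (a b : V) (φ : ExteriorAlgebra ℂ V) :
    ι ℂ a * (ι ℂ b * φ) = - (ι ℂ b * (ι ℂ a * φ)) := by
  rw [← mul_assoc, ι_anti, neg_mul, mul_assoc]

lemma ι_sq' (a : V) (φ : ExteriorAlgebra ℂ V) : ι ℂ a * (ι ℂ a * φ) = 0 := by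
  rw [← mul_assoc, ExteriorAlgebra.ι_sq_zero, zero_mul]

lemma euler {n : ℕ} (e : Fin n → V) (d : Fin n → Module.Dual ℂ V) {W : Submodule ℂ V}
    (h : ∀ w ∈ W, ∑ i, d i w • e i = w) (k : ℕ) :
    ∀ φ ∈ extPow V W k, ∑ i, ι ℂ (e i) * con (d i) φ = (k : ℂ) • φ := by
  induction k with
  | zero =>
    intro φ hφ
    simp [con_ext_zero _ hφ]
  | succ k ih =>
    apply ext_induct
    · intro a ha φ hφ
      have h1 : ∀ i, ι ℂ (e i) * con (d i) (ι ℂ a * φ)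
          = ι ℂ (d i a • e i) * φ + ι ℂ a * (ι ℂ (e i) * con (d i) φ) := by
        intro i
        rw [con_mul, mul_sub, ι_anti' (e i) a, sub_neg_eq_add]
        simp
      simp only [h1]
      rw [Finset.sum_add_distrib, ← Finset.sum_mul, ← map_sum, h a ha, ← Finset.mul_sum, ih φ hφ]
      rw [mul_smul_comm]
      push_cast
      rw [add_smul, one_smul, add_comm]
    · intro y z hy hz
      simp only [map_add, mul_add, Finset.sum_add_distrib, hy, hz, smul_add]

lemma ext_le_ext (W : Submodule ℂ V) (k : ℕ) : extPow V W k ≤ ⋀[ℂ]^k V := by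
  unfold extPow
  exact pow_le_pow_left' LinearMap.map_le_range k

lemma ι_mul_mem (a : V) {k : ℕ} {φ : ExteriorAlgebra ℂ V} (hφ : φ ∈ ⋀[ℂ]^k V) :
    ι ℂ a * φ ∈ ⋀[ℂ]^(k + 1) V := by
  have : (⋀[ℂ]^(k + 1) V) = LinearMap.range (ι ℂ (M := V)) * ⋀[ℂ]^k V := pow_succ' _ _
  rw [this]
  exact Submodule.mul_mem_mul ⟨a, rfl⟩ hφ

lemma volC_apply (k : ℕ) (vol : ⋀[ℂ]^k V →ₗ[ℂ] ℂ) {φ : ExteriorAlgebra ℂ V}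
    (hφ : φ ∈ ⋀[ℂ]^k V) : volC V k vol φ = vol ⟨φ, hφ⟩ := by
  unfold volC
  simp only [LinearMap.comp_apply]
  congr 1
  apply Subtype.ext
  change ((DirectSum.decompose (fun i : ℕ => ⋀[ℂ]^i V) φ) k : ExteriorAlgebra ℂ V) = φ
  exact DirectSum.decompose_of_mem_same _ hφ

lemma exists_dual {W : Submodule ℂ V} {x : V} (hx : x ∉ W) :
    ∃ d : Module.Dual ℂ V, d x = 1 ∧ ∀ w ∈ W, d w = 0 := by
  obtain ⟨f, hf, hW⟩ := Submodule.exists_dual_map_eq_bot_of_notMem hx inferInstance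
  refine ⟨(f x)⁻¹ • f, by simp [hf], fun w hw => ?_⟩
  have : f w ∈ W.map f := ⟨w, hw, rfl⟩
  rw [hW, Submodule.mem_bot] at this
  simp [this]

lemma sq_decomp {W : Submodule ℂ V} {x : V} (hx : ∀ a : V, ∃ s : ℂ, ∃ b ∈ W, a = b + s • x) :
    ∀ η ∈ ⋀[ℂ]^2 V, ∃ α ∈ extPow V W 2, ∃ u ∈ W, η = α + ι ℂ x * ι ℂ u := by
  intro η hη
  have h2 : (⋀[ℂ]^2 V) = LinearMap.range (ι ℂ (M := V)) * LinearMap.range (ι ℂ (M := V)) := pow_two _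
  rw [h2] at hη
  refine Submodule.mul_induction_on hη ?_ ?_
  · rintro _ ⟨a, rfl⟩ _ ⟨b, rfl⟩
    obtain ⟨s, a, ha, rfl⟩ := hx a
    obtain ⟨t, b, hb, rfl⟩ := hx b
    refine ⟨ι ℂ a * ι ℂ b, mul_mem_ext ha (ι_mem_ext hb), s • b - t • a,
      sub_mem (W.smul_mem _ hb) (W.smul_mem _ ha), ?_⟩
    simp only [map_add, map_sub, map_smul, add_mul, mul_add, mul_sub, smul_mul_assoc,
      mul_smul_comm, ExteriorAlgebra.ι_sq_zero, smul_zero, ι_anti a x]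
    module
  · rintro _ _ ⟨α, hα, u, hu, rfl⟩ ⟨α', hα', u', hu', rfl⟩
    refine ⟨α + α', add_mem hα hα', u + u', add_mem hu hu', ?_⟩
    rw [map_add, mul_add]; abel

lemma map_v_eq {W U : Submodule ℂ V} {v : V} (hU : U ≤ W)
    (h : ∀ a ∈ W, ∃ s : ℂ, ∃ b ∈ U, a = b + s • v) :
    Submodule.map (LinearMap.mulLeft ℂ (ι ℂ v)) (extPow V W 2)
      = Submodule.map (LinearMap.mulLeft ℂ (ι ℂ v)) (extPow V U 2) := by
  apply le_antisymm
  · rintro _ ⟨η, hη, rfl⟩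
    refine ext_induct W 1 (fun η => LinearMap.mulLeft ℂ (ι ℂ v) η ∈
      Submodule.map (LinearMap.mulLeft ℂ (ι ℂ v)) (extPow V U 2)) ?_ ?_ η hη
    · intro a ha φ hφ
      obtain ⟨c, hc, rfl⟩ := mem_ext_one hφ
      obtain ⟨s, a, ha', rfl⟩ := h a ha
      obtain ⟨t, c, hc', rfl⟩ := h c hc
      have hm : ι ℂ a * ι ℂ c ∈ extPow V U 2 := mul_mem_ext (k := 1) ha' (ι_mem_ext hc')
      refine Submodule.mem_map.mpr ⟨ι ℂ a * ι ℂ c, hm, ?_⟩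
      simp only [LinearMap.mulLeft_apply, map_add, map_smul, add_mul, mul_add, smul_mul_assoc,
        mul_smul_comm, ι_sq', ι_anti a v, mul_neg, smul_zero, neg_zero, add_zero]
    · intro y z hy hz
      simp only [map_add]
      exact add_mem hy hz
  · apply Submodule.map_mono
    unfold extPow
    exact pow_le_pow_left' (Submodule.map_mono hU) 2

lemma finrank_ext [FiniteDimensional ℂ V] (U : Submodule ℂ V) (k : ℕ) :
    finrank ℂ (extPow V U k) = (finrank ℂ U).choose k := by
  have hinj : Function.Injective (ExteriorAlgebra.map U.subtype) :=
    ExteriorAlgebra.map_injective_field (LinearMap.ker_eq_bot.mpr U.injective_subtype)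
  have : extPow V U k = Submodule.map (ExteriorAlgebra.map U.subtype).toLinearMap (⋀[ℂ]^k U) := by
    have h : (⋀[ℂ]^k U) = LinearMap.range (ι ℂ (M := U)) ^ k := rfl
    rw [h, Submodule.map_pow]
    unfold extPow
    congr 1
    ext y
    constructor
    · rintro ⟨a, ha, rfl⟩
      exact ⟨ι ℂ ⟨a, ha⟩, ⟨_, rfl⟩, by simp⟩
    · rintro ⟨_, ⟨a, rfl⟩, rfl⟩
      exact ⟨a, a.2, by simp⟩
  rw [this, ← exteriorPower.finrank_eq]
  exact (Submodule.equivMapOfInjective _ hinj _).finrank_eq.symm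

lemma finrank_v_ext [FiniteDimensional ℂ V] (U : Submodule ℂ V) (k : ℕ) {v : V}
    (d : Module.Dual ℂ V) (hdv : d v = 1) (hd : ∀ w ∈ U, d w = 0) :
    finrank ℂ (Submodule.map (LinearMap.mulLeft ℂ (ι ℂ v)) (extPow V U k))
      = (finrank ℂ U).choose k := by
  rw [← finrank_ext U k]
  have hinj : Function.Injective
      ((LinearMap.mulLeft ℂ (ι ℂ v)).domRestrict (extPow V U k)) := by
    rw [injective_iff_map_eq_zero]
    rintro ⟨φ, hφ⟩ h
    have h' : ι ℂ v * φ = 0 := h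
    have h2 := congrArg (con d) h'
    rw [con_mul, hdv, con_kill d hd k φ hφ, mul_zero, sub_zero, one_smul, map_zero] at h2
    exact Subtype.ext h2
  rw [← LinearMap.finrank_range_of_inj hinj, LinearMap.range_domRestrict]

lemma finrank_inf_ker [FiniteDimensional ℂ V] (W : Submodule ℂ V) {v : V} (hv : v ∈ W)
    (d : Module.Dual ℂ V) (hdv : d v = 1) :
    finrank ℂ (W ⊓ LinearMap.ker d : Submodule ℂ V) + 1 = finrank ℂ W := by
  have h := LinearMap.finrank_range_add_finrank_ker (d.domRestrict W)
  have hs : LinearMap.range (d.domRestrict W) = ⊤ := by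
    rw [LinearMap.range_eq_top]
    intro c
    exact ⟨c • ⟨v, hv⟩, by simp [hdv]⟩
  have hk : LinearMap.ker (d.domRestrict W) = (LinearMap.ker d).comap W.subtype := rfl
  rw [hs, finrank_top, finrank_self, hk, ← Submodule.finrank_map_subtype_eq,
    Submodule.map_comap_subtype] at h
  omega

lemma dual_family [FiniteDimensional ℂ V] (W : Submodule ℂ V) {n : ℕ} (hn : finrank ℂ W = n) :
    ∃ (e : Fin n → V) (d : Fin n → Module.Dual ℂ V), (∀ i, e i ∈ W) ∧
      (∀ i, d i (e i) = 1) ∧ ∀ w ∈ W, ∑ i, d i w • e i = w := by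
  obtain ⟨p, hp⟩ := W.subtype.exists_leftInverse_of_injective W.ker_subtype
  have hp' : ∀ w (hw : w ∈ W), p w = ⟨w, hw⟩ := fun w hw => LinearMap.congr_fun hp ⟨w, hw⟩
  let b := Module.finBasisOfFinrankEq ℂ W hn
  refine ⟨fun i => b i, fun i => b.coord i ∘ₗ p, fun i => (b i).2, fun i => ?_, fun w hw => ?_⟩
  · rw [LinearMap.comp_apply, hp' _ (b i).2]; simp
  · have := congrArg Subtype.val (b.sum_repr ⟨w, hw⟩)
    rw [AddSubmonoidClass.coe_finsetSum] at this
    simpa only [LinearMap.comp_apply, hp' w hw, Module.Basis.coord_apply, Submodule.coe_smul] using this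

lemma eq_zero_of_kill [FiniteDimensional ℂ V] (W : Submodule ℂ V) {k : ℕ} (hk : finrank ℂ W ≠ k)
    {θ : ExteriorAlgebra ℂ V} (hθ : θ ∈ extPow V W k) (h : ∀ u ∈ W, ι ℂ u * θ = 0) : θ = 0 := by
  obtain ⟨e, d, he, hde, hsum⟩ := dual_family W rfl
  have h1 := euler e d hsum k θ hθ
  have h2 : ∀ i, ι ℂ (e i) * con (d i) θ = θ := by
    intro i
    have := congrArg (con (d i)) (h (e i) (he i))
    rw [con_mul, hde, one_smul, map_zero, sub_eq_zero] at this
    exact this.symm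
  simp only [h2, Finset.sum_const, Finset.card_univ, Fintype.card_fin] at h1
  rw [← Nat.cast_smul_eq_nsmul ℂ, ← sub_eq_zero, ← sub_smul, smul_eq_zero, sub_eq_zero] at h1
  rcases h1 with h1 | h1
  · exact absurd (by exact_mod_cast h1) hk
  · exact h1

end EPW

theorem stmt5 (V : Type) [AddCommGroup V] [Module ℂ V]
    (hdim : finrank ℂ V = 6)
    (vol : ⋀[ℂ]^6 V →ₗ[ℂ] ℂ) (hvol : Function.Bijective vol)
    (V₅ : Submodule ℂ V) (hV₅ : finrank ℂ V₅ = 5)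
    (x : V) (hx : x ∉ V₅)
    (v : V) (hv5 : v ∈ V₅) (hv : v ≠ 0) :
    (EPW.Fv V v ⊓ EPW.extPow V V₅ 3
        = Submodule.map (LinearMap.mulLeft ℂ (ExteriorAlgebra.ι ℂ v)) (EPW.extPow V V₅ 2) ∧
      finrank ℂ
        (Submodule.map (LinearMap.mulLeft ℂ (ExteriorAlgebra.ι ℂ v)) (EPW.extPow V V₅ 2)) = 6) ∧
    ((Submodule.map (LinearMap.mulLeft ℂ (ExteriorAlgebra.ι ℂ v)) (EPW.extPow V V₅ 2) : Set _)
      = {β | β ∈ EPW.extPow V V₅ 3 ∧ ∀ γ ∈ EPW.vWedge V v V₅,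
          EPW.volC V 6 vol (ExteriorAlgebra.ι ℂ x * γ * β) = 0}) ∧
    ({w : ExteriorAlgebra ℂ V | w ∈ EPW.extPow V V₅ 2 ∧
        ∃ η ∈ EPW.extPow V V₅ 3, η + ExteriorAlgebra.ι ℂ x * w ∈ EPW.Fv V v}
      = (EPW.vWedge V v V₅ : Set _)) := by
  have hfin : FiniteDimensional ℂ V := FiniteDimensional.of_finrank_pos (by omega)
  obtain ⟨dx, hdx, hdxW⟩ := EPW.exists_dual hx
  obtain ⟨dv, hdv, -⟩ := EPW.exists_dual (W := (⊥ : Submodule ℂ V)) (x := v) (by simpa using hv)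
  -- `V = V₅ ⊕ ℂ x`
  have hker : LinearMap.ker dx = V₅ := by
    symm
    apply Submodule.eq_of_le_of_finrank_eq
    · intro w hw; exact hdxW w hw
    · have := EPW.finrank_inf_ker (⊤ : Submodule ℂ V) (v := x) trivial dx hdx
      rw [top_inf_eq, finrank_top] at this
      omega
  have hdec : ∀ a : V, ∃ s : ℂ, ∃ b ∈ V₅, a = b + s • x := by
    intro a
    refine ⟨dx a, a - dx a • x, ?_, by abel⟩
    rw [← hker, LinearMap.mem_ker]; simp [hdx]
  have hconx : ∀ k, ∀ φ ∈ EPW.extPow V V₅ k, EPW.con dx (ι ℂ x * φ) = φ := by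
    intro k φ hφ
    rw [EPW.con_mul, hdx, EPW.con_kill dx hdxW k φ hφ, mul_zero, sub_zero, one_smul]
  refine ⟨⟨?_, ?_⟩, ?_, ?_⟩
  · apply le_antisymm
    · rintro _ ⟨⟨η, hη, rfl⟩, h3⟩
      obtain ⟨α, hα, u, hu, rfl⟩ := EPW.sq_decomp hdec η hη
      have h0 := EPW.con_kill dx hdxW 3 _ h3
      rw [LinearMap.mulLeft_apply, mul_add, EPW.ι_anti' v x, map_add, map_neg,
        hconx 2 _ (EPW.mul_mem_ext hv5 (EPW.ι_mem_ext hu)),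
        EPW.con_kill dx hdxW 3 _ (EPW.mul_mem_ext hv5 hα), zero_add, neg_eq_zero] at h0
      refine ⟨α, hα, ?_⟩
      rw [LinearMap.mulLeft_apply, LinearMap.mulLeft_apply, mul_add, EPW.ι_anti' v x, h0]
      simp
    · rintro _ ⟨α, hα, rfl⟩
      exact ⟨⟨α, EPW.ext_le_ext _ _ hα, rfl⟩, EPW.mul_mem_ext hv5 hα⟩
  · have hr := EPW.finrank_inf_ker V₅ hv5 dv hdv
    rw [EPW.map_v_eq (U := V₅ ⊓ LinearMap.ker dv) inf_le_left,
      EPW.finrank_v_ext _ 2 dv hdv (fun w hw => (Submodule.mem_inf.mp hw).2)]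
    · have : finrank ℂ (V₅ ⊓ LinearMap.ker dv : Submodule ℂ V) = 4 := by omega
      rw [this]; rfl
    · intro a ha
      refine ⟨dv a, a - dv a • v, Submodule.mem_inf.mpr ⟨sub_mem ha (V₅.smul_mem _ hv5), ?_⟩, by abel⟩
      rw [LinearMap.mem_ker]; simp [hdv]
  · ext β
    constructor
    · rintro ⟨α, hα, rfl⟩
      refine ⟨EPW.mul_mem_ext hv5 hα, ?_⟩
      rintro _ ⟨_, ⟨u, hu, rfl⟩, rfl⟩
      have : ι ℂ x * (LinearMap.mulLeft ℂ (ι ℂ v)) (ι ℂ u)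
          * (LinearMap.mulLeft ℂ (ι ℂ v)) α = 0 := by
        simp only [LinearMap.mulLeft_apply, mul_assoc]
        rw [EPW.ι_anti' u v, mul_neg, EPW.ι_sq']; simp
      rw [this, map_zero]
    · rintro ⟨hβ, h⟩
      have hθ : ι ℂ v * β = 0 := by
        apply EPW.eq_zero_of_kill V₅ (k := 4) (by omega) (EPW.mul_mem_ext hv5 hβ)
        intro u hu
        have h1 := h (ι ℂ v * ι ℂ u) ⟨ι ℂ u, ⟨u, hu, rfl⟩, rfl⟩
        rw [mul_assoc, mul_assoc] at h1
        have hm5 := EPW.mul_mem_ext hv5 (EPW.mul_mem_ext hu hβ)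
        have hm6 := EPW.ι_mul_mem x (EPW.ext_le_ext _ _ hm5)
        rw [EPW.volC_apply 6 vol hm6] at h1
        have h2 := hvol.1 (h1.trans (map_zero vol).symm)
        have h3 : ι ℂ x * (ι ℂ v * (ι ℂ u * β)) = 0 := congrArg Subtype.val h2
        have h4 := hconx 5 _ hm5
        rw [h3, map_zero] at h4
        rw [EPW.ι_anti' u v, ← h4, neg_zero]
      refine ⟨EPW.con dv β, EPW.con_mem dv 2 β hβ, ?_⟩
      have h5 := congrArg (EPW.con dv) hθ
      rw [EPW.con_mul, hdv, one_smul, map_zero, sub_eq_zero] at h5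
      exact h5.symm
  · ext w
    constructor
    · rintro ⟨hw, η, hη, ⟨ζ, hζ, h⟩⟩
      obtain ⟨α, hα, u, hu, rfl⟩ := EPW.sq_decomp hdec ζ hζ
      have h0 := congrArg (EPW.con dx) h
      rw [LinearMap.mulLeft_apply, mul_add, EPW.ι_anti' v x, map_add, map_add, map_neg,
        hconx 2 _ (EPW.mul_mem_ext hv5 (EPW.ι_mem_ext hu)), hconx 2 _ hw,
        EPW.con_kill dx hdxW 3 _ (EPW.mul_mem_ext hv5 hα),
        EPW.con_kill dx hdxW 3 _ hη, zero_add, zero_add] at h0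
      refine ⟨ι ℂ (-u), ⟨-u, neg_mem hu, rfl⟩, ?_⟩
      rw [← h0]; simp
    · rintro ⟨_, ⟨u, hu, rfl⟩, rfl⟩
      refine ⟨EPW.mul_mem_ext hv5 (EPW.ι_mem_ext hu), 0, zero_mem _,
        ⟨-(ι ℂ x * ι ℂ u), neg_mem (EPW.ι_mul_mem x ?_), ?_⟩⟩
      · exact EPW.ext_le_ext _ _ (EPW.ι_mem_ext hu)
      · simp only [LinearMap.mulLeft_apply, zero_add, mul_neg]
        rw [EPW.ι_anti' v x, neg_neg]
end
end

section
/- For every linear subspace W ⊆ ⋀²V₅ and every symmetric bilinear form q on W, one has A(W,q) ∩ F_x = {x∧w : w ∈ W and q(w,w′) = 0 for all w′ ∈ W}; in particular dim(A(W,q) ∩ F_x) equals the dimension of the radical of q. -/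
open ExteriorAlgebra Module

noncomputable section

namespace EPW

variable (V : Type) [AddCommGroup V] [Module ℂ V]

/-- The Lagrangian subspace `A(W,q)` associated to a subspace `W ⊆ ⋀²V₅` and a bilinear
form `q` on `W`:  `A(W,q) = {η + x∧w : w ∈ W, η ∈ ⋀³V₅, vol(x∧η∧w') = -q(w,w') ∀ w' ∈ W}`. -/
def AWq (vol : ⋀[ℂ]^6 V →ₗ[ℂ] ℂ) (x : V) (V₅ : Submodule ℂ V)
    (W : Submodule ℂ (ExteriorAlgebra ℂ V)) (q : W →ₗ[ℂ] W →ₗ[ℂ] ℂ) :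
    Submodule ℂ (ExteriorAlgebra ℂ V) where
  carrier := {z | ∃ w : W, ∃ η ∈ extPow V V₅ 3,
    z = η + ExteriorAlgebra.ι ℂ x * (w : ExteriorAlgebra ℂ V) ∧
    ∀ w' : W, volC V 6 vol (ExteriorAlgebra.ι ℂ x * η * (w' : ExteriorAlgebra ℂ V)) = - q w w'}
  add_mem' := by
    rintro a b ⟨w, η, hη, rfl, hc⟩ ⟨w', η', hη', rfl, hc'⟩
    refine ⟨w + w', η + η', add_mem hη hη', ?_, ?_⟩
    · rw [Submodule.coe_add, mul_add]
      abel
    · intro w₀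
      have h1 : ExteriorAlgebra.ι ℂ x * (η + η') * (w₀ : ExteriorAlgebra ℂ V)
          = ExteriorAlgebra.ι ℂ x * η * (w₀ : ExteriorAlgebra ℂ V)
            + ExteriorAlgebra.ι ℂ x * η' * (w₀ : ExteriorAlgebra ℂ V) := by
        rw [mul_add, add_mul]
      rw [h1, map_add, hc w₀, hc' w₀, map_add, LinearMap.add_apply]
      ring
  zero_mem' := by
    refine ⟨0, 0, zero_mem _, by simp, ?_⟩
    intro w'
    simp
  smul_mem' := by
    rintro c a ⟨w, η, hη, rfl, hc⟩
    refine ⟨c • w, c • η, Submodule.smul_mem _ c hη, ?_, ?_⟩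
    · rw [Submodule.coe_smul, smul_add, mul_smul_comm]
    · intro w₀
      have h1 : ExteriorAlgebra.ι ℂ x * (c • η) * (w₀ : ExteriorAlgebra ℂ V)
          = c • (ExteriorAlgebra.ι ℂ x * η * (w₀ : ExteriorAlgebra ℂ V)) := by
        rw [mul_smul_comm, smul_mul_assoc]
      rw [h1, map_smul, hc w₀, map_smul, LinearMap.smul_apply, smul_eq_mul, smul_eq_mul]
      ring

end EPW

namespace EPW

/-- Contraction with a functional vanishing on `U` kills the powers of `U`. -/
lemma contract_extPow (V : Type) [AddCommGroup V] [Module ℂ V] (U : Submodule ℂ V)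
    (d : Module.Dual ℂ V) (hd : U ≤ LinearMap.ker d) (k : ℕ)
    (η : ExteriorAlgebra ℂ V) (hη : η ∈ extPow V U k) :
    CliffordAlgebra.contractLeft (Q := (0 : QuadraticForm ℂ V)) d η = 0 := by
  induction k generalizing η with
  | zero =>
    rw [extPow, pow_zero, Submodule.mem_one] at hη
    obtain ⟨c, rfl⟩ := hη
    exact CliffordAlgebra.contractLeft_algebraMap (Q := (0 : QuadraticForm ℂ V)) d c
  | succ k ih =>
    rw [extPow, pow_succ'] at hη
    refine Submodule.mul_induction_on hη ?_ ?_
    · rintro _ ⟨u, hu, rfl⟩ b hb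
      have h := CliffordAlgebra.contractLeft_ι_mul (Q := (0 : QuadraticForm ℂ V)) d u b
      rw [ih b hb, mul_zero, show d u = 0 from hd hu, zero_smul, sub_zero] at h
      exact h
    · intro a b ha hb
      rw [map_add, ha, hb, add_zero]

/-- Wedging with `x ∉ U` is injective on the powers of `U`. -/
lemma eq_zero_of_ι_mul (V : Type) [AddCommGroup V] [Module ℂ V] (U : Submodule ℂ V)
    (x : V) (hx : x ∉ U) (k : ℕ)
    (η : ExteriorAlgebra ℂ V) (hη : η ∈ extPow V U k)
    (h0 : ExteriorAlgebra.ι ℂ x * η = 0) : η = 0 := by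
  obtain ⟨d, hdx, hd⟩ := Submodule.exists_le_ker_of_notMem hx
  have h := CliffordAlgebra.contractLeft_ι_mul (Q := (0 : QuadraticForm ℂ V)) d x η
  rw [contract_extPow V U d hd k η hη, mul_zero, sub_zero] at h
  have h1 : CliffordAlgebra.contractLeft (Q := (0 : QuadraticForm ℂ V)) d
      (ExteriorAlgebra.ι ℂ x * η) = d x • η := h
  rw [h0, map_zero] at h1
  exact (smul_eq_zero.mp h1.symm).resolve_left hdx

lemma extPow_le (V : Type) [AddCommGroup V] [Module ℂ V] (U : Submodule ℂ V) (k : ℕ) :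
    extPow V U k ≤ ⋀[ℂ]^k V := by
  refine pow_le_pow_left₀ zero_le ?_ k
  rintro _ ⟨u, _, rfl⟩
  exact ⟨u, rfl⟩

end EPW

theorem stmt7 (V : Type) [AddCommGroup V] [Module ℂ V]
    (hdim : finrank ℂ V = 6)
    (vol : ⋀[ℂ]^6 V →ₗ[ℂ] ℂ) (hvol : Function.Bijective vol)
    (V₅ : Submodule ℂ V) (hV₅ : finrank ℂ V₅ = 5)
    (x : V) (hx : x ∉ V₅)
    (W : Submodule ℂ (ExteriorAlgebra ℂ V)) (hW : W ≤ EPW.extPow V V₅ 2)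
    (q : W →ₗ[ℂ] W →ₗ[ℂ] ℂ) (hq : ∀ a b : W, q a b = q b a) :
    ((EPW.AWq V vol x V₅ W q ⊓ EPW.Fv V x : Submodule ℂ (ExteriorAlgebra ℂ V)) : Set _)
      = {z | ∃ w : W, (∀ w' : W, q w w' = 0) ∧
          z = ExteriorAlgebra.ι ℂ x * (w : ExteriorAlgebra ℂ V)} ∧
    finrank ℂ (EPW.AWq V vol x V₅ W q ⊓ EPW.Fv V x : Submodule ℂ (ExteriorAlgebra ℂ V))
      = finrank ℂ (LinearMap.ker q) := by
  have key : ((EPW.AWq V vol x V₅ W q ⊓ EPW.Fv V x : Submodule ℂ (ExteriorAlgebra ℂ V)) : Set _)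
      = {z | ∃ w : W, (∀ w' : W, q w w' = 0) ∧
          z = ExteriorAlgebra.ι ℂ x * (w : ExteriorAlgebra ℂ V)} := by
    ext z
    constructor
    · rintro ⟨⟨w, η, hη, hz, hc⟩, ⟨θ, hθ, hzθ⟩⟩
      have hzθ' : ExteriorAlgebra.ι ℂ x * θ = z := hzθ
      have h1 : ExteriorAlgebra.ι ℂ x * z = 0 := by
        rw [← hzθ', ← mul_assoc, ExteriorAlgebra.ι_sq_zero, zero_mul]
      rw [hz, mul_add, ← mul_assoc, ExteriorAlgebra.ι_sq_zero, zero_mul,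
        add_zero] at h1
      have h2 : η = 0 := EPW.eq_zero_of_ι_mul V V₅ x hx 3 η hη h1
      subst h2
      refine ⟨w, fun w' => ?_, by rw [hz, zero_add]⟩
      have h3 := hc w'
      rw [mul_zero, zero_mul, map_zero] at h3
      exact neg_eq_zero.mp h3.symm
    · rintro ⟨w, hw, rfl⟩
      refine ⟨⟨w, 0, zero_mem _, by rw [zero_add], fun w' => ?_⟩,
        ⟨w, EPW.extPow_le V V₅ 2 (hW w.2), rfl⟩⟩
      rw [mul_zero, zero_mul, map_zero, hw w', neg_zero]
  refine ⟨key, ?_⟩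
  let f : W →ₗ[ℂ] ExteriorAlgebra ℂ V :=
    (LinearMap.mulLeft ℂ (ExteriorAlgebra.ι ℂ x)) ∘ₗ W.subtype
  have hf : Function.Injective f := by
    rw [← LinearMap.ker_eq_bot, LinearMap.ker_eq_bot']
    intro w hw
    exact Subtype.ext (EPW.eq_zero_of_ι_mul V V₅ x hx 2 w (hW w.2) hw)
  have hmap : (EPW.AWq V vol x V₅ W q ⊓ EPW.Fv V x : Submodule ℂ (ExteriorAlgebra ℂ V))
      = (LinearMap.ker q).map f := by
    apply SetLike.coe_injective
    rw [key]
    ext z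
    constructor
    · rintro ⟨w, hw, rfl⟩
      exact ⟨w, LinearMap.ext hw, rfl⟩
    · rintro ⟨w, hw, rfl⟩
      exact ⟨w, fun w' => LinearMap.congr_fun hw w', rfl⟩
  rw [hmap]
  exact (Submodule.equivMapOfInjective f hf (LinearMap.ker q)).finrank_eq.symm
end
end

section
/- Let A be any Lagrangian subspace of (⋀³V₆, ω) and set W = {w ∈ ⋀²V₅ : η + x∧w ∈ A for some η ∈ ⋀³V₅}. Then there is a unique symmetric bilinear form q on W such that A = A(W,q); namely, for all w, w′ ∈ W and any η ∈ ⋀³V₅ with η + x∧w ∈ A, the value −vol(x∧η∧w′) does not depend on the choice of η, and setting q(w,w′) = −vol(x∧η∧w′) defines a symmetric bilinear form on W with A = A(W,q). Moreover dim W = 10 − dim(A ∩ ⋀³V₅). -/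
open ExteriorAlgebra Module

noncomputable section

namespace EPW

variable (V : Type) [AddCommGroup V] [Module ℂ V]

/-- The subspace `W = λ₃(A) ⊆ ⋀²V₅` associated to a Lagrangian subspace `A`:
the set of `w ∈ ⋀²V₅` such that `η + x∧w ∈ A` for some `η ∈ ⋀³V₅`. -/
def Wof (x : V) (V₅ : Submodule ℂ V) (A : Submodule ℂ (ExteriorAlgebra ℂ V)) :
    Submodule ℂ (ExteriorAlgebra ℂ V) where
  carrier := {w | w ∈ extPow V V₅ 2 ∧ ∃ η ∈ extPow V V₅ 3,
    η + ExteriorAlgebra.ι ℂ x * w ∈ A}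
  add_mem' := by
    rintro a b ⟨ha, η, hη, hA⟩ ⟨hb, η', hη', hA'⟩
    refine ⟨add_mem ha hb, η + η', add_mem hη hη', ?_⟩
    have heq : η + η' + ExteriorAlgebra.ι ℂ x * (a + b) =
        (η + ExteriorAlgebra.ι ℂ x * a) + (η' + ExteriorAlgebra.ι ℂ x * b) := by
      rw [mul_add]; abel
    rw [heq]
    exact add_mem hA hA'
  zero_mem' := by
    refine ⟨zero_mem _, 0, zero_mem _, ?_⟩
    simp
  smul_mem' := by
    rintro c a ⟨ha, η, hη, hA⟩
    refine ⟨Submodule.smul_mem _ c ha, c • η, Submodule.smul_mem _ c hη, ?_⟩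
    have heq : c • η + ExteriorAlgebra.ι ℂ x * (c • a)
        = c • (η + ExteriorAlgebra.ι ℂ x * a) := by
      rw [mul_smul_comm, smul_add]
    rw [heq]
    exact A.smul_mem c hA

end EPW

namespace EPWaux

variable {V : Type} [AddCommGroup V] [Module ℂ V]

/-- left contraction on the exterior algebra -/
def ctr (d : Module.Dual ℂ V) : ExteriorAlgebra ℂ V →ₗ[ℂ] ExteriorAlgebra ℂ V :=
  CliffordAlgebra.contractLeft (Q := (0 : QuadraticForm ℂ V)) d

lemma ctr_mul (d : Module.Dual ℂ V) (v : V) (a : ExteriorAlgebra ℂ V) :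
    ctr d (ι ℂ v * a) = d v • a - ι ℂ v * ctr d a :=
  CliffordAlgebra.contractLeft_ι_mul d v a

lemma ctr_algebraMap (d : Module.Dual ℂ V) (r : ℂ) :
    ctr d (algebraMap ℂ _ r) = 0 :=
  CliffordAlgebra.contractLeft_algebraMap (0 : QuadraticForm ℂ V) d r

lemma swap (u v : V) : ι ℂ u * ι ℂ v = - (ι ℂ v * ι ℂ u) :=
  eq_neg_of_add_eq_zero_left (ExteriorAlgebra.ι_add_mul_swap u v)

lemma mul_mem_ext {i j k : ℕ} (h : i + j = k) {a b : ExteriorAlgebra ℂ V}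
    (ha : a ∈ ⋀[ℂ]^i V) (hb : b ∈ ⋀[ℂ]^j V) : a * b ∈ ⋀[ℂ]^k V := by
  subst h
  rw [exteriorPower, pow_add]
  exact Submodule.mul_mem_mul ha hb

lemma ι_mem_ext (v : V) : ι ℂ v ∈ ⋀[ℂ]^1 V := by
  rw [exteriorPower, pow_one]; exact ⟨v, rfl⟩

lemma extPow_le (V₅ : Submodule ℂ V) (k : ℕ) : EPW.extPow V V₅ k ≤ ⋀[ℂ]^k V := by
  unfold EPW.extPow
  exact pow_le_pow_left' LinearMap.map_le_range k

lemma comm_ι (v : V) {k : ℕ} {a : ExteriorAlgebra ℂ V} (ha : a ∈ ⋀[ℂ]^k V) :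
    a * ι ℂ v = (-1 : ℂ) ^ k • (ι ℂ v * a) := by
  induction ha using Submodule.pow_induction_on_left' with
  | algebraMap r => simp [Algebra.commutes]
  | add x y i hx hy h1 h2 => rw [add_mul, h1, h2, mul_add, smul_add]
  | mem_mul m hm i x hx h =>
    obtain ⟨u, rfl⟩ := hm
    rw [mul_assoc, h, mul_smul_comm, ← mul_assoc, swap u v, Nat.succ_eq_add_one, pow_succ]
    simp [mul_assoc]

lemma comm_two {k : ℕ} {w z : ExteriorAlgebra ℂ V} (hw : w ∈ ⋀[ℂ]^2 V) (hz : z ∈ ⋀[ℂ]^k V) :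
    w * z = z * w := by
  rw [exteriorPower, pow_two] at hw
  induction hw using Submodule.mul_induction_on' with
  | mem_mul_mem m hm n hn =>
    obtain ⟨u, rfl⟩ := hm
    obtain ⟨v, rfl⟩ := hn
    rw [← mul_assoc z, comm_ι u hz, smul_mul_assoc, mul_assoc (ι ℂ u) z, comm_ι v hz,
      mul_smul_comm, smul_smul, ← mul_pow]
    simp [mul_assoc]
  | add x hx y hy h1 h2 => rw [add_mul, h1, h2, mul_add]

lemma euler {n : ℕ} (b : Basis (Fin n) ℂ V) {k : ℕ} {a : ExteriorAlgebra ℂ V}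
    (ha : a ∈ ⋀[ℂ]^k V) : ∑ i, ι ℂ (b i) * ctr (b.coord i) a = (k : ℂ) • a := by
  induction ha using Submodule.pow_induction_on_left' with
  | algebraMap r => simp [ctr_algebraMap]
  | add x y i hx hy h1 h2 => simp [mul_add, Finset.sum_add_distrib, h1, h2]
  | mem_mul m hm i x hx h =>
    obtain ⟨u, rfl⟩ := hm
    have h1 : ∀ j, ι ℂ (b j) * ctr (b.coord j) (ι ℂ u * x)
        = ι ℂ (b.repr u j • b j) * x + ι ℂ u * (ι ℂ (b j) * ctr (b.coord j) x) := by
      intro j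
      rw [ctr_mul, mul_sub, ← mul_assoc (ι ℂ (b j)), swap (b j) u]
      simp [mul_assoc]
    simp_rw [h1]
    rw [Finset.sum_add_distrib, ← Finset.sum_mul, ← map_sum, b.sum_repr, ← Finset.mul_sum, h]
    push_cast
    rw [mul_smul_comm, add_smul, one_smul, add_comm]

lemma eq_zero_of_ι_mul {n : ℕ} (b : Basis (Fin n) ℂ V) {k : ℕ} (hk : k < n)
    {a : ExteriorAlgebra ℂ V} (ha : a ∈ ⋀[ℂ]^k V) (h : ∀ v, ι ℂ v * a = 0) : a = 0 := by
  have h1 := euler b ha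
  have h2 : ∀ j, ι ℂ (b j) * ctr (b.coord j) a = a - ctr (b.coord j) (ι ℂ (b j) * a) := by
    intro j
    rw [ctr_mul]
    simp
  simp_rw [h2, h, map_zero, sub_zero] at h1
  rw [Finset.sum_const, Finset.card_univ, Fintype.card_fin, ← Nat.cast_smul_eq_nsmul ℂ,
    ← sub_eq_zero, ← sub_smul] at h1
  rcases smul_eq_zero.1 h1 with h3 | h3
  · rw [sub_eq_zero] at h3
    exact absurd (Nat.cast_injective h3) (by omega)
  · exact h3

lemma nondeg {n : ℕ} (b : Basis (Fin n) ℂ V) (m : ℕ) : ∀ {k : ℕ}, k + m ≤ n →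
    ∀ {a : ExteriorAlgebra ℂ V}, a ∈ ⋀[ℂ]^k V → (∀ c ∈ ⋀[ℂ]^m V, c * a = 0) → a = 0 := by
  induction m with
  | zero =>
    intro k hk a ha h
    simpa using h 1 (by simp [exteriorPower])
  | succ m ih =>
    intro k hk a ha h
    refine eq_zero_of_ι_mul b (by omega) ha fun v => ?_
    refine ih (k := k + 1) (by omega) (mul_mem_ext (by omega) (ι_mem_ext v) ha) fun c hc => ?_
    rw [← mul_assoc]
    exact h _ (mul_mem_ext rfl hc (ι_mem_ext v))

lemma ext_zero (hdim : finrank ℂ V = 6) {a : ExteriorAlgebra ℂ V} (ha : a ∈ ⋀[ℂ]^7 V) :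
    a = 0 := by
  have : Module.Finite ℂ V := Module.finite_of_finrank_pos (by omega)
  have h := exteriorPower.finrank_eq (R := ℂ) (M := V) (n := 7)
  rw [hdim, show Nat.choose 6 7 = 0 from rfl, Submodule.finrank_eq_zero] at h
  rw [h] at ha
  simpa using ha

lemma ctr_extPow {V₅ : Submodule ℂ V} {d : Module.Dual ℂ V} (hd : ∀ v ∈ V₅, d v = 0) {k : ℕ}
    {a : ExteriorAlgebra ℂ V} (ha : a ∈ EPW.extPow V V₅ k) : ctr d a = 0 := by
  unfold EPW.extPow at ha
  induction ha using Submodule.pow_induction_on_left' with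
  | algebraMap r => exact ctr_algebraMap d r
  | add x y i hx hy h1 h2 => rw [map_add, h1, h2, add_zero]
  | mem_mul m hm i x hx h =>
    obtain ⟨u, hu, rfl⟩ := hm
    rw [ctr_mul, hd u hu, h]; simp

lemma exists_dual {V₅ : Submodule ℂ V} {x : V} (hx : x ∉ V₅) :
    ∃ d : Module.Dual ℂ V, d x = 1 ∧ ∀ v ∈ V₅, d v = 0 := by
  obtain ⟨f, hf, hf'⟩ := Submodule.exists_le_ker_of_notMem hx
  refine ⟨(f x)⁻¹ • f, by simp [hf], fun v hv => ?_⟩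
  have : f v = 0 := hf' hv
  simp [this]

lemma ctr_x {V₅ : Submodule ℂ V} {d : Module.Dual ℂ V} (hd : ∀ v ∈ V₅, d v = 0) {x : V}
    (hdx : d x = 1) {k : ℕ} {a : ExteriorAlgebra ℂ V} (ha : a ∈ EPW.extPow V V₅ k) :
    ctr d (ι ℂ x * a) = a := by
  rw [ctr_mul, ctr_extPow hd ha, hdx]; simp

lemma decomp_inj {V₅ : Submodule ℂ V} {x : V} (hx : x ∉ V₅) {k l : ℕ}
    {η η' w w' : ExteriorAlgebra ℂ V}
    (hη : η ∈ EPW.extPow V V₅ k) (hη' : η' ∈ EPW.extPow V V₅ k)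
    (hw : w ∈ EPW.extPow V V₅ l) (hw' : w' ∈ EPW.extPow V V₅ l)
    (h : η + ι ℂ x * w = η' + ι ℂ x * w') : η = η' ∧ w = w' := by
  obtain ⟨d, hdx, hd⟩ := exists_dual hx
  have h2 := congrArg (ctr d) h
  rw [map_add, map_add, ctr_x hd hdx hw, ctr_x hd hdx hw', ctr_extPow hd hη,
    ctr_extPow hd hη', zero_add, zero_add] at h2
  subst h2
  exact ⟨add_right_cancel h, rfl⟩

lemma extPow_six (hdim : finrank ℂ V = 6) {V₅ : Submodule ℂ V} {x : V} (hx : x ∉ V₅)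
    {a : ExteriorAlgebra ℂ V} (ha : a ∈ EPW.extPow V V₅ 6) : a = 0 := by
  obtain ⟨d, hdx, hd⟩ := exists_dual hx
  rw [← ctr_x hd hdx ha, ext_zero hdim (mul_mem_ext rfl (ι_mem_ext x) (extPow_le _ _ ha)),
    map_zero]

lemma split (hdim : finrank ℂ V = 6) {V₅ : Submodule ℂ V} (hV₅ : finrank ℂ V₅ = 5) {x : V}
    (hx : x ∉ V₅) (v : V) : ∃ u ∈ V₅, ∃ c : ℂ, v = u + c • x := by
  have : Module.Finite ℂ V := Module.finite_of_finrank_pos (by omega)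
  have hlt : V₅ < V₅ ⊔ Submodule.span ℂ {x} := by
    refine lt_of_le_of_ne le_sup_left fun h => hx ?_
    rw [h]
    exact Submodule.mem_sup_right (Submodule.mem_span_singleton_self x)
  have h1 := Submodule.finrank_lt_finrank_of_lt hlt
  have h2 : V₅ ⊔ Submodule.span ℂ {x} = ⊤ := by
    apply Submodule.eq_top_of_finrank_eq
    have := Submodule.finrank_le (V₅ ⊔ Submodule.span ℂ {x})
    omega
  have h3 : v ∈ V₅ ⊔ Submodule.span ℂ {x} := h2 ▸ Submodule.mem_top
  obtain ⟨u, hu, y, hy, rfl⟩ := Submodule.mem_sup.1 h3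
  obtain ⟨c, rfl⟩ := Submodule.mem_span_singleton.1 hy
  exact ⟨u, hu, c, rfl⟩

lemma mul_mem_extPow {V₅ : Submodule ℂ V} {i j k : ℕ} (h : i + j = k) {a b : ExteriorAlgebra ℂ V}
    (ha : a ∈ EPW.extPow V V₅ i) (hb : b ∈ EPW.extPow V V₅ j) : a * b ∈ EPW.extPow V V₅ k := by
  subst h
  rw [EPW.extPow, pow_add]
  exact Submodule.mul_mem_mul ha hb

lemma ι_mem_extPow {V₅ : Submodule ℂ V} {v : V} (hv : v ∈ V₅) : ι ℂ v ∈ EPW.extPow V V₅ 1 := by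
  rw [EPW.extPow, pow_one]; exact ⟨v, hv, rfl⟩

lemma decomp (hdim : finrank ℂ V = 6) {V₅ : Submodule ℂ V} (hV₅ : finrank ℂ V₅ = 5) {x : V}
    (hx : x ∉ V₅) (k : ℕ) : ∀ {a : ExteriorAlgebra ℂ V}, a ∈ ⋀[ℂ]^(k + 1) V →
    ∃ η ∈ EPW.extPow V V₅ (k + 1), ∃ w ∈ EPW.extPow V V₅ k, a = η + ι ℂ x * w := by
  induction k with
  | zero =>
    intro a ha
    rw [exteriorPower, zero_add, pow_one] at ha
    obtain ⟨v, rfl⟩ := ha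
    obtain ⟨u, hu, c, rfl⟩ := split hdim hV₅ hx v
    refine ⟨ι ℂ u, ι_mem_extPow hu, algebraMap ℂ _ c, ?_, ?_⟩
    · rw [EPW.extPow, pow_zero]
      exact Submodule.algebraMap_mem c
    · rw [map_add, map_smul, ← Algebra.commutes, Algebra.smul_def]
  | succ k ih =>
    intro a ha
    rw [exteriorPower, pow_succ'] at ha
    induction ha using Submodule.mul_induction_on' with
    | mem_mul_mem m hm n hn =>
      obtain ⟨v, rfl⟩ := hm
      obtain ⟨u, hu, c, rfl⟩ := split hdim hV₅ hx v
      obtain ⟨η, hη, w, hw, rfl⟩ := ih hn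
      refine ⟨ι ℂ u * η, mul_mem_extPow (by omega) (ι_mem_extPow hu) hη,
        c • η - ι ℂ u * w, sub_mem (Submodule.smul_mem _ _ hη)
          (mul_mem_extPow (by omega) (ι_mem_extPow hu) hw), ?_⟩
      rw [map_add, map_smul, add_mul, mul_add, mul_add, ← mul_assoc (ι ℂ u) (ι ℂ x), swap u x,
        mul_sub, ← mul_assoc (ι ℂ x) (ι ℂ u), smul_mul_assoc, smul_mul_assoc,
        ← mul_assoc (ι ℂ x) (ι ℂ x), ExteriorAlgebra.ι_sq_zero, mul_smul_comm]
      simp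
      abel
    | add y hy z hz h1 h2 =>
      obtain ⟨η, hη, w, hw, rfl⟩ := h1
      obtain ⟨η', hη', w', hw', rfl⟩ := h2
      refine ⟨η + η', add_mem hη hη', w + w', add_mem hw hw', ?_⟩
      rw [mul_add]; abel

lemma volC_eq {k : ℕ} (vol : ⋀[ℂ]^k V →ₗ[ℂ] ℂ) {a : ExteriorAlgebra ℂ V} (ha : a ∈ ⋀[ℂ]^k V) :
    EPW.volC V k vol a = vol ⟨a, ha⟩ := by
  have : (DirectSum.decompose (fun i : ℕ => ⋀[ℂ]^i V) a) k = ⟨a, ha⟩ :=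
    Subtype.ext (DirectSum.decompose_of_mem_same _ ha)
  rw [← this]
  rfl

lemma lagr (hdim : finrank ℂ V = 6)
    (vol : ⋀[ℂ]^6 V →ₗ[ℂ] ℂ) (hvol : Function.Bijective vol)
    (A : Submodule ℂ (ExteriorAlgebra ℂ V)) (hA3 : A ≤ ⋀[ℂ]^3 V)
    (hA10 : finrank ℂ A = 10)
    (hAlag : ∀ a b : ExteriorAlgebra ℂ V, a ∈ A → b ∈ A → EPW.volC V 6 vol (a * b) = 0)
    {z : ExteriorAlgebra ℂ V} (hz : z ∈ ⋀[ℂ]^3 V)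
    (h : ∀ a ∈ A, EPW.volC V 6 vol (z * a) = 0) : z ∈ A := by
  have : Module.Finite ℂ V := Module.finite_of_finrank_pos (by omega)
  let b : Basis (Fin 6) ℂ V := Module.finBasisOfFinrankEq ℂ V hdim
  let B : LinearMap.BilinForm ℂ (⋀[ℂ]^3 V) := LinearMap.mk₂ ℂ
    (fun y z => EPW.volC V 6 vol ((z : ExteriorAlgebra ℂ V) * y))
    (by intros; simp [mul_add]) (by intros; simp) (by intros; simp [add_mul]) (by intros; simp)
  have hB : ∀ y z, B y z = EPW.volC V 6 vol ((z : ExteriorAlgebra ℂ V) * y) := fun _ _ => rfl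
  have hker : LinearMap.ker B = ⊥ := by
    rw [LinearMap.ker_eq_bot']
    intro y hy
    refine Subtype.ext (nondeg b 3 (k := 3) (by norm_num) y.2 fun c hc => ?_)
    have h1 := LinearMap.congr_fun hy ⟨c, hc⟩
    rw [hB, volC_eq vol (mul_mem_ext rfl hc y.2), LinearMap.zero_apply,
      map_eq_zero_iff vol hvol.1] at h1
    exact congrArg Subtype.val h1
  let A' : Submodule ℂ (⋀[ℂ]^3 V) := A.comap (Submodule.subtype _)
  have hA' : finrank ℂ A' = 10 := by
    rw [← hA10]
    exact (Submodule.comapSubtypeEquivOfLe hA3).finrank_eq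
  have h1 := LinearMap.BilinForm.finrank_add_finrank_orthogonal' (B := B) A'
  rw [hker, inf_bot_eq, finrank_bot, exteriorPower.finrank_eq, hdim, hA',
    show Nat.choose 6 3 = 20 from rfl] at h1
  have hle : A' ≤ B.orthogonal A' := by
    intro m hm n hn
    exact hAlag _ _ hm hn
  have heq := Submodule.eq_of_le_of_finrank_eq hle (by omega)
  have hzm : (⟨z, hz⟩ : ⋀[ℂ]^3 V) ∈ B.orthogonal A' := by
    intro n hn
    exact h _ hn
  rw [← heq] at hzm
  exact hzm

lemma pair (hdim : finrank ℂ V = 6) (vol : ⋀[ℂ]^6 V →ₗ[ℂ] ℂ)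
    {V₅ : Submodule ℂ V} {x : V} (hx : x ∉ V₅)
    {η η' w w' : ExteriorAlgebra ℂ V}
    (hη : η ∈ EPW.extPow V V₅ 3) (hη' : η' ∈ EPW.extPow V V₅ 3)
    (hw : w ∈ EPW.extPow V V₅ 2) :
    EPW.volC V 6 vol ((η + ι ℂ x * w) * (η' + ι ℂ x * w'))
      = EPW.volC V 6 vol (ι ℂ x * η' * w) - EPW.volC V 6 vol (ι ℂ x * η * w') := by
  have hη3 := extPow_le _ _ hη
  have hw2 := extPow_le _ _ hw
  have e1 : η * η' = 0 := extPow_six hdim hx (mul_mem_extPow rfl hη hη')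
  have e2 : η * (ι ℂ x * w') = - (ι ℂ x * η * w') := by
    rw [← mul_assoc, comm_ι x hη3]
    norm_num
  have e3 : ι ℂ x * w * η' = ι ℂ x * η' * w := by
    rw [mul_assoc, comm_two hw2 (extPow_le _ _ hη'), mul_assoc]
  have e4 : ι ℂ x * w * (ι ℂ x * w') = 0 := by
    rw [mul_assoc, ← mul_assoc w, comm_two hw2 (ι_mem_ext x), mul_assoc, ← mul_assoc,
      ExteriorAlgebra.ι_sq_zero, zero_mul]
  rw [add_mul, mul_add, mul_add, e1, e2, e3, e4, ← map_sub]
  congr 1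
  abel

end EPWaux

theorem stmt8 (V : Type) [AddCommGroup V] [Module ℂ V]
    (hdim : finrank ℂ V = 6)
    (vol : ⋀[ℂ]^6 V →ₗ[ℂ] ℂ) (hvol : Function.Bijective vol)
    (V₅ : Submodule ℂ V) (hV₅ : finrank ℂ V₅ = 5)
    (x : V) (hx : x ∉ V₅)
    (A : Submodule ℂ (ExteriorAlgebra ℂ V)) (hA3 : A ≤ ⋀[ℂ]^3 V)
    (hA10 : finrank ℂ A = 10)
    (hAlag : ∀ a b : ExteriorAlgebra ℂ V, a ∈ A → b ∈ A → EPW.volC V 6 vol (a * b) = 0) :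
    (∀ w ∈ EPW.Wof V x V₅ A, ∀ w' ∈ EPW.Wof V x V₅ A,
      ∀ η ∈ EPW.extPow V V₅ 3, ∀ η' ∈ EPW.extPow V V₅ 3,
        η + ExteriorAlgebra.ι ℂ x * w ∈ A → η' + ExteriorAlgebra.ι ℂ x * w ∈ A →
        EPW.volC V 6 vol (ExteriorAlgebra.ι ℂ x * η * w')
          = EPW.volC V 6 vol (ExteriorAlgebra.ι ℂ x * η' * w')) ∧
    (∃! q : EPW.Wof V x V₅ A →ₗ[ℂ] EPW.Wof V x V₅ A →ₗ[ℂ] ℂ,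
      (∀ a b, q a b = q b a) ∧ A = EPW.AWq V vol x V₅ (EPW.Wof V x V₅ A) q) ∧
    (∀ q : EPW.Wof V x V₅ A →ₗ[ℂ] EPW.Wof V x V₅ A →ₗ[ℂ] ℂ,
      (∀ (w w' : EPW.Wof V x V₅ A) (η : ExteriorAlgebra ℂ V), η ∈ EPW.extPow V V₅ 3 →
        η + ExteriorAlgebra.ι ℂ x * (w : ExteriorAlgebra ℂ V) ∈ A →
        q w w' = - EPW.volC V 6 vol
          (ExteriorAlgebra.ι ℂ x * η * (w' : ExteriorAlgebra ℂ V))) →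
      ((∀ a b, q a b = q b a) ∧ A = EPW.AWq V vol x V₅ (EPW.Wof V x V₅ A) q)) ∧
    finrank ℂ (EPW.Wof V x V₅ A)
      = 10 - finrank ℂ (A ⊓ EPW.extPow V V₅ 3 : Submodule ℂ (ExteriorAlgebra ℂ V)) := by
  open EPWaux in
  have key : ∀ {η η' w w' : ExteriorAlgebra ℂ V}, η ∈ EPW.extPow V V₅ 3 →
      η' ∈ EPW.extPow V V₅ 3 → w ∈ EPW.extPow V V₅ 2 → η + ι ℂ x * w ∈ A →
      η' + ι ℂ x * w' ∈ A →
      EPW.volC V 6 vol (ι ℂ x * η * w') = EPW.volC V 6 vol (ι ℂ x * η' * w) := by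
    intro η η' w w' hη hη' hw h h'
    have h1 := hAlag _ _ h h'
    rw [pair hdim vol hx hη hη' hw] at h1
    exact (sub_eq_zero.1 h1).symm
  have indep : ∀ w ∈ EPW.Wof V x V₅ A, ∀ w' ∈ EPW.Wof V x V₅ A,
      ∀ η ∈ EPW.extPow V V₅ 3, ∀ η' ∈ EPW.extPow V V₅ 3,
        η + ExteriorAlgebra.ι ℂ x * w ∈ A → η' + ExteriorAlgebra.ι ℂ x * w ∈ A →
        EPW.volC V 6 vol (ExteriorAlgebra.ι ℂ x * η * w')
          = EPW.volC V 6 vol (ExteriorAlgebra.ι ℂ x * η' * w') := by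
    rintro w ⟨hw, -⟩ w' ⟨hw', η'', hη'', hA''⟩ η hη η' hη' h h'
    rw [key hη hη'' hw h hA'', key hη' hη'' hw h' hA'']
  have good : ∀ q : EPW.Wof V x V₅ A →ₗ[ℂ] EPW.Wof V x V₅ A →ₗ[ℂ] ℂ,
      (∀ (w w' : EPW.Wof V x V₅ A) (η : ExteriorAlgebra ℂ V), η ∈ EPW.extPow V V₅ 3 →
        η + ExteriorAlgebra.ι ℂ x * (w : ExteriorAlgebra ℂ V) ∈ A →
        q w w' = - EPW.volC V 6 vol
          (ExteriorAlgebra.ι ℂ x * η * (w' : ExteriorAlgebra ℂ V))) →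
      ((∀ a b, q a b = q b a) ∧ A = EPW.AWq V vol x V₅ (EPW.Wof V x V₅ A) q) := by
    intro q hq
    refine ⟨?_, ?_⟩
    · intro a b
      obtain ⟨ha, η, hη, hηA⟩ := a.2
      obtain ⟨hb, η', hη', hηA'⟩ := b.2
      rw [hq a b η hη hηA, hq b a η' hη' hηA', key hη hη' ha hηA hηA']
    · apply le_antisymm
      · intro z hz
        obtain ⟨η, hη, w, hw, rfl⟩ := EPWaux.decomp hdim hV₅ hx 2 (hA3 hz)
        have hwW : w ∈ EPW.Wof V x V₅ A := ⟨hw, η, hη, hz⟩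
        refine ⟨⟨w, hwW⟩, η, hη, rfl, fun w' => ?_⟩
        rw [hq ⟨w, hwW⟩ w' η hη hz, neg_neg]
      · rintro z ⟨w, η, hη, rfl, hc⟩
        obtain ⟨hw, η₀, hη₀, hη₀A⟩ := w.2
        have hd : η - η₀ ∈ A := by
          refine EPWaux.lagr hdim vol hvol A hA3 hA10 hAlag
            (EPWaux.extPow_le _ _ (sub_mem hη hη₀)) fun a ha => ?_
          obtain ⟨η', hη', w', hw', rfl⟩ := EPWaux.decomp hdim hV₅ hx 2 (hA3 ha)
          have h1 := EPWaux.pair hdim vol hx (w' := w') (sub_mem hη hη₀) hη'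
            (zero_mem (EPW.extPow V V₅ 2))
          rw [mul_zero, add_zero, mul_zero, map_zero] at h1
          rw [h1, mul_sub, sub_mul, map_sub]
          have h2 := hc ⟨w', hw', η', hη', ha⟩
          rw [hq w ⟨w', hw', η', hη', ha⟩ η₀ hη₀ hη₀A, neg_neg] at h2
          rw [h2]
          simp
        have : η + ι ℂ x * (w : ExteriorAlgebra ℂ V)
            = (η - η₀) + (η₀ + ι ℂ x * (w : ExteriorAlgebra ℂ V)) := by abel
        rw [this]
        exact add_mem hd hη₀A
  have hex : ∃ q : EPW.Wof V x V₅ A →ₗ[ℂ] EPW.Wof V x V₅ A →ₗ[ℂ] ℂ,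
      (∀ (w w' : EPW.Wof V x V₅ A) (η : ExteriorAlgebra ℂ V), η ∈ EPW.extPow V V₅ 3 →
        η + ExteriorAlgebra.ι ℂ x * (w : ExteriorAlgebra ℂ V) ∈ A →
        q w w' = - EPW.volC V 6 vol
          (ExteriorAlgebra.ι ℂ x * η * (w' : ExteriorAlgebra ℂ V))) := by
    choose f hf hfA using fun w : EPW.Wof V x V₅ A => w.2.2
    have hfi : ∀ (w w' : EPW.Wof V x V₅ A) (η : ExteriorAlgebra ℂ V), η ∈ EPW.extPow V V₅ 3 →
        η + ExteriorAlgebra.ι ℂ x * (w : ExteriorAlgebra ℂ V) ∈ A →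
        - EPW.volC V 6 vol (ι ℂ x * f w * (w' : ExteriorAlgebra ℂ V)) =
        - EPW.volC V 6 vol (ι ℂ x * η * (w' : ExteriorAlgebra ℂ V)) := by
      intro w w' η hη h
      rw [indep w w.2 w' w'.2 _ (hf w) _ hη (hfA w) h]
    refine ⟨LinearMap.mk₂ ℂ
      (fun w w' => - EPW.volC V 6 vol (ι ℂ x * f w * (w' : ExteriorAlgebra ℂ V)))
      ?_ ?_ ?_ ?_, hfi⟩
    · intro a b c
      rw [hfi (a + b) c (f a + f b) (add_mem (hf a) (hf b))]
      · simp [mul_add, add_mul]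
        ring
      · have := add_mem (hfA a) (hfA b)
        rw [Submodule.coe_add, mul_add]
        convert this using 1
        abel
    · intro r a c
      rw [hfi (r • a) c (r • f a) (Submodule.smul_mem _ r (hf a))]
      · simp
      · have := Submodule.smul_mem _ r (hfA a)
        rwa [smul_add, ← mul_smul_comm] at this
    · intro a b c
      simp [mul_add]
      ring
    · intro r a c
      simp
  refine ⟨indep, ?_, good, ?_⟩
  · obtain ⟨q, hq⟩ := hex
    refine ⟨q, good q hq, ?_⟩
    rintro q' ⟨-, hq'⟩
    ext w w'
    obtain ⟨hw, η, hη, hηA⟩ := w.2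
    rw [hq w w' η hη hηA]
    have h1 : η + ι ℂ x * (w : ExteriorAlgebra ℂ V) ∈
      EPW.AWq V vol x V₅ (EPW.Wof V x V₅ A) q' := hq' ▸ hηA
    obtain ⟨w₁, η₁, hη₁, he, hc⟩ := h1
    obtain ⟨e1, e2⟩ := EPWaux.decomp_inj hx hη hη₁ hw w₁.2.1 he
    have e3 : w = w₁ := Subtype.ext e2
    subst e1 e3
    rw [hc w', neg_neg]
  · obtain ⟨d, hdx, hd⟩ := EPWaux.exists_dual hx
    have : Module.Finite ℂ A := Module.finite_of_finrank_pos (by omega)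
    let g : A →ₗ[ℂ] ExteriorAlgebra ℂ V := EPWaux.ctr d ∘ₗ A.subtype
    have hval : ∀ {η w : ExteriorAlgebra ℂ V}, η ∈ EPW.extPow V V₅ 3 →
        w ∈ EPW.extPow V V₅ 2 → EPWaux.ctr d (η + ι ℂ x * w) = w := by
      intro η w hη hw
      rw [map_add, EPWaux.ctr_extPow hd hη, EPWaux.ctr_x hd hdx hw, zero_add]
    have hr : LinearMap.range g = EPW.Wof V x V₅ A := by
      ext w
      constructor
      · rintro ⟨⟨a, ha⟩, rfl⟩
        obtain ⟨η, hη, w, hw, rfl⟩ := EPWaux.decomp hdim hV₅ hx 2 (hA3 ha)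
        have : g ⟨_, ha⟩ = w := hval hη hw
        rw [this]
        exact ⟨hw, η, hη, ha⟩
      · rintro ⟨hw, η, hη, ha⟩
        exact ⟨⟨_, ha⟩, hval hη hw⟩
    have hk : (LinearMap.ker g).map A.subtype = A ⊓ EPW.extPow V V₅ 3 := by
      ext z
      constructor
      · rintro ⟨⟨a, ha⟩, h0, rfl⟩
        obtain ⟨η, hη, w, hw, rfl⟩ := EPWaux.decomp hdim hV₅ hx 2 (hA3 ha)
        have h1 : g ⟨_, ha⟩ = w := hval hη hw
        have h2 : w = 0 := h1.symm.trans h0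
        refine ⟨ha, ?_⟩
        subst h2
        simpa using hη
      · rintro ⟨ha, h3⟩
        exact ⟨⟨z, ha⟩, EPWaux.ctr_extPow hd h3, rfl⟩
    have hrn := LinearMap.finrank_range_add_finrank_ker g
    rw [hr, ← Submodule.finrank_map_subtype_eq, hk, hA10] at hrn
    omega
end
end

section
/- If M is a ℤ-submodule of ℚ² with L₀ ⊆ M and B(x,x) ∈ 2ℤ for every x ∈ M, then M = L₀; that is, the even lattice with Gram matrix [[10,1],[1,−2]] admits no nontrivial even overlattice. -/
theorem stmt14 (B : (Fin 2 → ℚ) → (Fin 2 → ℚ) → ℚ)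
    (hB : ∀ x y : Fin 2 → ℚ,
      B x y = 10 * x 0 * y 0 + x 0 * y 1 + x 1 * y 0 - 2 * x 1 * y 1)
    (M : Submodule ℤ (Fin 2 → ℚ))
    (hL : Submodule.span ℤ {![(1:ℚ), 0], ![0, 1]} ≤ M)
    (heven : ∀ x ∈ M, ∃ k : ℤ, B x x = 2 * k) :
    M = Submodule.span ℤ {![(1:ℚ), 0], ![0, 1]} := by
  refine le_antisymm (fun x hx => ?_) hL
  have h1 : ![(1:ℚ), 0] ∈ M := hL (Submodule.subset_span (by simp))
  have h2 : ![(0:ℚ), 1] ∈ M := hL (Submodule.subset_span (by simp))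
  obtain ⟨k, hk⟩ := heven x hx
  obtain ⟨k1, hk1⟩ := heven _ (M.add_mem hx h1)
  obtain ⟨k2, hk2⟩ := heven _ (M.add_mem hx h2)
  rw [hB] at hk hk1 hk2
  simp at hk1 hk2
  obtain ⟨m, hm⟩ : ∃ m : ℤ, 10 * x 0 + x 1 = m := ⟨k1 - k - 5, by push_cast; linarith⟩
  obtain ⟨n, hn⟩ : ∃ n : ℤ, x 0 - 2 * x 1 = n := ⟨k2 - k + 1, by push_cast; linarith⟩
  obtain ⟨p, hp⟩ : ∃ p : ℤ, 21 * x 0 = p := ⟨2 * m + n, by push_cast; linarith⟩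
  have hb : x 1 = m - 10 * x 0 := by linarith
  have ha : x 0 = p / 21 := by linarith
  have key : 5 * p ^ 2 = 21 * (p * m - m ^ 2 - k) := by
    rw [hb, ha] at hk
    have : (5 * p ^ 2 : ℚ) = 21 * (p * m - m ^ 2 - k) := by
      field_simp at hk
      linarith
    exact_mod_cast this
  have d3 : (3:ℤ) ∣ p := by
    have : (3:ℤ) ∣ p ^ 2 := by omega
    exact Int.prime_three.dvd_of_dvd_pow this
  have d7 : (7:ℤ) ∣ p := by
    have : (7:ℤ) ∣ p ^ 2 := by omega
    exact (Nat.prime_iff_prime_int.mp (by norm_num : Nat.Prime 7)).dvd_of_dvd_pow this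
  obtain ⟨q, rfl⟩ : (21:ℤ) ∣ p := by omega
  have ha' : x 0 = q := by rw [ha]; push_cast; ring
  rw [Submodule.mem_span_pair]
  refine ⟨q, m - 10 * q, ?_⟩
  ext i
  fin_cases i
  · simp [ha']
  · simp [hb, ha']
end

section
/- If M is a ℤ-submodule of ℚ² with L₀ ⊆ M, B(x,x) ∈ 2ℤ for every x ∈ M, and M ≠ L₀, then M is isometric to the hyperbolic plane: there exist u, w ∈ M with M = ℤu + ℤw, B(u,u) = B(w,w) = 0 and B(u,w) = 1. In other words, the only nontrivial even overlattice of the even lattice with Gram matrix [[10,5],[5,0]] is the hyperbolic plane U. -/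
theorem stmt15 (B : (Fin 2 → ℚ) → (Fin 2 → ℚ) → ℚ)
    (hB : ∀ x y : Fin 2 → ℚ,
      B x y = 10 * x 0 * y 0 + 5 * x 0 * y 1 + 5 * x 1 * y 0)
    (M : Submodule ℤ (Fin 2 → ℚ))
    (hL : Submodule.span ℤ {![(1:ℚ), 0], ![0, 1]} ≤ M)
    (heven : ∀ x ∈ M, ∃ k : ℤ, B x x = 2 * k)
    (hne : M ≠ Submodule.span ℤ {![(1:ℚ), 0], ![0, 1]}) :
    ∃ u w : Fin 2 → ℚ, u ∈ M ∧ w ∈ M ∧ M = Submodule.span ℤ {u, w} ∧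
      B u u = 0 ∧ B w w = 0 ∧ B u w = 1 := by
  have he1 : ![(1:ℚ), 0] ∈ M := hL (Submodule.subset_span (by simp))
  have he2 : ![(0:ℚ), 1] ∈ M := hL (Submodule.subset_span (by simp))
  have hf : ![(1:ℚ), -1] ∈ M := by
    have := M.sub_mem he1 he2
    simpa using this
  -- integrality in the isotropic coordinates p = x 0, q = x 0 + x 1
  have key : ∀ x ∈ M, ∃ m n k : ℤ, x 0 = m / 5 ∧ x 1 = (n - m) / 5 ∧ m * n = 5 * k := by
    intro x hx
    obtain ⟨a, ha⟩ := heven x hx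
    obtain ⟨b, hb⟩ := heven _ (M.add_mem hx he2)
    obtain ⟨c, hc⟩ := heven _ (M.add_mem hx hf)
    simp only [hB, Pi.add_apply, Matrix.cons_val_zero, Matrix.cons_val_one] at ha hb hc
    have h0 : x 0 = ((b - a : ℤ) : ℚ) / 5 := by push_cast; linarith
    have h1 : x 1 = (((c - a : ℤ) : ℚ) - ((b - a : ℤ) : ℚ)) / 5 := by push_cast; linarith
    refine ⟨b - a, c - a, a, h0, h1, ?_⟩
    rw [h0, h1] at ha
    have : (((b - a) * (c - a) : ℤ) : ℚ) = ((5 * a : ℤ) : ℚ) := by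
      push_cast at ha ⊢
      linarith
    exact_mod_cast this
  have p5 : Prime (5 : ℤ) := by norm_num
  have inv5 : ∀ m : ℤ, ¬ (5 ∣ m) → ∃ j s : ℤ, m * j = 1 - 5 * s := by
    intro m hm
    obtain ⟨u, v, h⟩ := ((Prime.coprime_iff_not_dvd p5).2 hm)
    exact ⟨v, u, by linarith⟩
  have comb : ∀ x ∈ M, ∀ j s t : ℤ,
      ![(j:ℚ) * x 0 + s, j * x 1 - s + t] ∈ M := by
    intro x hx j s t
    have := M.add_mem (M.add_mem (M.smul_mem j hx) (M.smul_mem s hf)) (M.smul_mem t he2)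
    convert this using 1
    ext i
    simp only [Pi.add_apply, Pi.smul_apply, zsmul_eq_mul]
    fin_cases i
    · simp
    · simp
      ring
  by_cases hA : ∃ x ∈ M, ∃ m n k : ℤ, x 0 = m / 5 ∧ x 1 = (n - m) / 5 ∧ m * n = 5 * k ∧ ¬ (5 ∣ m)
  · obtain ⟨x, hx, m, n, k, h0, h1, hk, hm⟩ := hA
    obtain ⟨t, rfl⟩ : (5:ℤ) ∣ n := (p5.dvd_or_dvd ⟨k, hk⟩).resolve_left hm
    obtain ⟨j, s, hj⟩ := inv5 m hm
    have hjq : (m:ℚ) * j = 1 - 5 * s := by exact_mod_cast hj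
    have hu : ![(1/5:ℚ), -1/5] ∈ M := by
      convert comb x hx j s (-j * t) using 1
      ext i
      fin_cases i <;> simp [h0, h1] <;> linarith
    refine ⟨_, _, hu, he2, le_antisymm ?_ ?_, ?_, ?_, ?_⟩
    · intro y hy
      obtain ⟨a, b, c, y0, y1, hc⟩ := key y hy
      obtain ⟨a', b', c', z0, z1, hc'⟩ := key _ (M.add_mem hy hu)
      simp [y0, y1] at z0 z1
      have e1 : a' = a + 1 := by
        have : (a':ℚ) = a + 1 := by linarith
        exact_mod_cast this
      have e2 : b' = b := by
        have : (b':ℚ) = b := by linarith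
        exact_mod_cast this
      subst e1 e2
      have hb : b' = 5 * (c' - c) := by linarith
      rw [Submodule.mem_span_pair]
      refine ⟨a, c' - c, ?_⟩
      have hbq : (b':ℚ) = 5 * (c' - c) := by exact_mod_cast hb
      ext i
      fin_cases i <;> simp [y0, y1] <;> linarith
    · rw [Submodule.span_le]
      rintro z (rfl | rfl)
      exacts [hu, he2]
    all_goals simp [hB]
    all_goals norm_num
  · obtain ⟨x, hx, hxn⟩ : ∃ x ∈ M, x ∉ Submodule.span ℤ {![(1:ℚ), 0], ![0, 1]} := by
      by_contra! h
      exact hne (le_antisymm h hL)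
    have hA' : ∀ y ∈ M, ∃ m n : ℤ, y 0 = m ∧ y 1 = n / 5 - m := by
      intro y hy
      obtain ⟨a, b, c, y0, y1, hc⟩ := key y hy
      have : (5:ℤ) ∣ a := by
        by_contra h
        exact hA ⟨y, hy, a, b, c, y0, y1, hc, h⟩
      obtain ⟨d, rfl⟩ := this
      push_cast at y0 y1
      exact ⟨d, b, by linarith, by linarith⟩
    obtain ⟨m, n, h0, h1⟩ := hA' x hx
    have hn : ¬ (5:ℤ) ∣ n := by
      rintro ⟨t, rfl⟩
      apply hxn
      rw [Submodule.mem_span_pair]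
      refine ⟨m, t - m, ?_⟩
      ext i
      fin_cases i <;> simp [h0, h1]
    obtain ⟨j, s, hj⟩ := inv5 n hn
    have hjq : (n:ℚ) * j = 1 - 5 * s := by exact_mod_cast hj
    have hw : ![(0:ℚ), 1/5] ∈ M := by
      convert comb x hx j (-j * m) s using 1
      ext i
      fin_cases i <;> simp [h0, h1] <;> linarith
    refine ⟨_, _, hf, hw, le_antisymm ?_ ?_, ?_, ?_, ?_⟩
    · intro y hy
      obtain ⟨a, b, y0, y1⟩ := hA' y hy
      rw [Submodule.mem_span_pair]
      refine ⟨a, b, ?_⟩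
      ext i
      fin_cases i <;> simp [y0, y1] <;> ring
    · rw [Submodule.span_le]
      rintro z (rfl | rfl)
      exacts [hf, hw]
    all_goals simp [hB]
    all_goals norm_num
end

section
/- If M is a ℤ-submodule of ℚ² with L₀ ⊆ M and B(x,x) ∈ 2ℤ for every x ∈ M, then M = L₀; that is, the even lattice with Gram matrix [[10,2],[2,−2]] admits no nontrivial even overlattice. -/
theorem stmt16 (B : (Fin 2 → ℚ) → (Fin 2 → ℚ) → ℚ)
    (hB : ∀ x y : Fin 2 → ℚ,
      B x y = 10 * x 0 * y 0 + 2 * x 0 * y 1 + 2 * x 1 * y 0 - 2 * x 1 * y 1)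
    (M : Submodule ℤ (Fin 2 → ℚ))
    (hL : Submodule.span ℤ {![(1:ℚ), 0], ![0, 1]} ≤ M)
    (heven : ∀ x ∈ M, ∃ k : ℤ, B x x = 2 * k) :
    M = Submodule.span ℤ {![(1:ℚ), 0], ![0, 1]} := by
  refine le_antisymm ?_ hL
  intro x hx
  have h1 : ![(1:ℚ), 0] ∈ M := hL (Submodule.subset_span (by simp))
  have h2 : ![(0:ℚ), 1] ∈ M := hL (Submodule.subset_span (by simp))
  obtain ⟨k, hk⟩ := heven x hx
  obtain ⟨k1, hk1⟩ := heven _ (M.add_mem hx h1)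
  obtain ⟨k2, hk2⟩ := heven _ (M.add_mem hx h2)
  rw [hB] at hk hk1 hk2
  simp at hk1 hk2
  -- p = 10a+2b, q = 2a-2b, m = 12a
  obtain ⟨q, hq⟩ : ∃ q : ℤ, q = k2 - k + 1 := ⟨_, rfl⟩
  obtain ⟨m, hm⟩ : ∃ m : ℤ, m = k1 - k - 5 + q := ⟨_, rfl⟩
  have hqQ : (q : ℚ) = 2 * x 0 - 2 * x 1 := by
    rw [hq]; push_cast; linarith
  have hmQ : (m : ℚ) = 12 * x 0 := by
    rw [hm]; push_cast; rw [hqQ]; linarith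
  have key : m ^ 2 - 6 * q ^ 2 = 24 * k := by
    have : (m : ℚ) ^ 2 - 6 * (q : ℚ) ^ 2 = 24 * k := by
      rw [hmQ, hqQ]; linarith
    exact_mod_cast this
  have d2 : (2 : ℤ) ∣ m := Int.prime_two.dvd_of_dvd_pow (n := 2) (by omega)
  have d3 : (3 : ℤ) ∣ m := Int.prime_three.dvd_of_dvd_pow (n := 2) (by omega)
  obtain ⟨n, rfl⟩ : (6 : ℤ) ∣ m := by omega
  have key2 : 6 * n ^ 2 - q ^ 2 = 4 * k := by linarith
  obtain ⟨r, rfl⟩ : (2 : ℤ) ∣ q := Int.prime_two.dvd_of_dvd_pow (n := 2) (by omega)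
  have key3 : 3 * n ^ 2 - 2 * r ^ 2 = 2 * k := by linarith
  obtain ⟨s, rfl⟩ : (2 : ℤ) ∣ n := Int.prime_two.dvd_of_dvd_pow (n := 2) (by omega)
  push_cast at hmQ hqQ
  rw [Submodule.mem_span_pair]
  refine ⟨s, s - r, ?_⟩
  ext i
  fin_cases i
  · simp; linarith
  · simp; linarith
end
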